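/- For every integer k ≥ 2, the following identity of formal power series in x over ℤ holds: (1 − 2x + x^{k+1})² · Σ_{n≥1} ( Σ_{w ∈ F_{n,k}} ver(w) ) xⁿ = 10x − 9x² − 3(1 + k)·x^{k} − (4 − 3k)·x^{k+1} + 8x^{k+2} − 2x^{2k+2}. In other words, the generating function for the total number of vertices of all k-bonacci graphs on words of length n is V_k(x) = (10x − 9x² − 3(1+k)x^k − (4−3k)x^{k+1} + 8x^{k+2} − 2x^{2k+2})/(1 − 2x + x^{k+1})². -/

import Mathlib

open Finset

/-- Number of `1`s in a binary word. -/
def wOnes (w : List Bool) : ℕ := w.count true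

/-- Number of maximal runs (blocks) of consecutive `1`s in a binary word. -/
def wRuns (w : List Bool) : ℕ := w.count true - (w.zip w.tail).count (true, true)

/-- The set `F_{n,k}` of binary words of length `n` avoiding `k` consecutive `1`s. -/
def kbonWords (n k : ℕ) : Finset (Fin n → Bool) :=
  Finset.univ.filter (fun w => ¬ (List.replicate k true <:+: List.ofFn w))

/-- Number of vertices of the `k`-bonacci graph of a word `w` of length `n`:
`ver(w) = 2n + 2 + s(w) + b(w)`. -/
def wVer (n : ℕ) (w : List Bool) : ℕ := 2 * n + 2 + wOnes w + wRuns w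

/-!
A word followed by a `0` factors uniquely into blocks `1ʲ0`, and it is `k`-bonacci exactly when
every block has `j < k`. So if a statistic `φ` is additive over the factors of a word cut at its
zeros, the series `N = ∑ x^|w|` and `V = ∑ φ(w) x^|w|` over `k`-bonacci words satisfy
`N = P (1 + x N)` and `V = Q (1 + x N) + x P V`, where `P = ∑_{j<k} xʲ` and
`Q = ∑_{j<k} φ(1ʲ) xʲ`. Eliminating `N` and `P` gives `(1 - 2x + xᵏ⁺¹)² V = (1 - x)² Q`, and the
number of vertices is such a statistic, with `φ(1ʲ) = 3(j + 1)` for `j > 0` and `φ(ε) = 2`.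
-/

section ReplicateInfix

variable {α : Type*} {a b : α} {j k : ℕ}

theorem not_replicate_prefix_replicate_append_cons (hb : b ≠ a) (hj : j < k) (w : List α) :
    ¬ List.replicate k a <+: List.replicate j a ++ b :: w := by
  obtain ⟨d, rfl⟩ := Nat.exists_eq_add_of_lt hj
  rw [add_assoc, List.replicate_add, List.prefix_append_right_inj, List.replicate_succ,
    List.cons_prefix_cons]
  exact fun h => hb h.1.symm

theorem replicate_infix_replicate_append_cons_iff (hb : b ≠ a) (hj : j < k) (w : List α) :
    List.replicate k a <:+: List.replicate j a ++ b :: w ↔ List.replicate k a <:+: w := by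
  induction j with
  | zero =>
    have hhead := not_replicate_prefix_replicate_append_cons hb hj w
    rw [List.replicate_zero, List.nil_append] at hhead ⊢
    rw [List.infix_cons_iff, or_iff_right hhead]
  | succ j ih =>
    have hhead := not_replicate_prefix_replicate_append_cons hb hj w
    rw [List.replicate_succ (n := j), List.cons_append] at hhead ⊢
    rw [List.infix_cons_iff, or_iff_right hhead, ih (Nat.lt_of_succ_lt hj)]

end ReplicateInfix

section VertexCount

theorem count_true_true_zip_tail_le (w : List Bool) :
    (w.zip w.tail).count (true, true) ≤ w.count true :=
  calc (w.zip w.tail).count (true, true)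
      ≤ ((w.zip w.tail).map Prod.snd).count true := List.count_le_count_map (f := Prod.snd)
    _ = w.tail.count true := by rw [List.map_snd_zip (by simp)]
    _ ≤ w.count true := (List.tail_sublist w).count_le true

theorem count_true_true_zip_tail_append_false_cons (u w : List Bool) :
    ((u ++ false :: w).zip (u ++ false :: w).tail).count (true, true) =
      (u.zip u.tail).count (true, true) + (w.zip w.tail).count (true, true) := by
  induction u with
  | nil => cases w <;> simp
  | cons a u ih =>
    cases u with
    | nil => cases w <;> simp
    | cons b u =>
      simp only [List.cons_append, List.tail_cons, List.zip_cons_cons, List.count_cons] at ih ⊢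
      omega

theorem wRuns_append_false_cons (u w : List Bool) :
    wRuns (u ++ false :: w) = wRuns u + wRuns w := by
  have hu := count_true_true_zip_tail_le u
  have hw := count_true_true_zip_tail_le w
  have hones : (u ++ false :: w).count true = u.count true + w.count true := by simp
  simp only [wRuns, count_true_true_zip_tail_append_false_cons, hones]
  omega

theorem wVer_append_false_cons (u w : List Bool) :
    wVer (u ++ false :: w).length (u ++ false :: w) = wVer u.length u + wVer w.length w := by
  have hones : wOnes (u ++ false :: w) = wOnes u + wOnes w := by simp [wOnes]
  simp only [wVer, hones, wRuns_append_false_cons, List.length_append, List.length_cons]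
  ring

theorem wRuns_replicate_true (j : ℕ) :
    wRuns (List.replicate j true) = if j = 0 then 0 else 1 := by
  simp only [wRuns, List.tail_replicate, List.zip_replicate, List.count_replicate_self]
  split_ifs <;> omega

theorem wVer_replicate_true (j : ℕ) :
    (wVer j (List.replicate j true) : ℤ) = 3 * (j + 1) - if j = 0 then 1 else 0 := by
  rw [wVer, wRuns_replicate_true, wOnes, List.count_replicate_self]
  split_ifs <;> push_cast <;> ring

end VertexCount

theorem one_sub_sq_mul_sum_succ_mul_pow {R : Type*} [CommRing R] (x : R) (k : ℕ) :
    (1 - x) ^ 2 * ∑ j ∈ range k, ((j : R) + 1) * x ^ j =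
      1 - (k + 1) * x ^ k + k * x ^ (k + 1) := by
  induction k with
  | zero => simp
  | succ k ih =>
    rw [sum_range_succ, mul_add, ih]
    push_cast
    ring

theorem sum_ofFn_succ {M α : Type*} [AddCommMonoid M] [Fintype α] (f : List α → M) (n : ℕ) :
    ∑ w : Fin (n + 1) → α, f (List.ofFn w) =
      ∑ a, ∑ w : Fin n → α, f (a :: List.ofFn w) := by
  rw [← (Fin.consEquiv fun _ => α).sum_comp, Fintype.sum_prod_type]
  simp [Fin.consEquiv]

section WordSeries

open PowerSeries

variable {R : Type*} [Semiring R] {α : Type*} [Fintype α]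

/-- The generating function `∑ f(w) x^|w|` of a statistic `f`, over all words `w` in the
alphabet `α`; words of length `n` are encoded as functions on `Fin n`. -/
noncomputable def wordGF (f : List α → R) : R⟦X⟧ :=
  mk fun n => ∑ w : Fin n → α, f (List.ofFn w)

theorem wordGF_eq_C_add_X_mul (f : List α → R) :
    wordGF f = C (f []) + X * ∑ a, wordGF fun w => f (a :: w) := by
  ext n
  cases n with
  | zero => simp [wordGF]
  | succ n =>
    simp only [map_add, coeff_succ_X_mul, coeff_C, Nat.succ_ne_zero, if_false, zero_add, map_sum,
      wordGF, coeff_mk, sum_ofFn_succ]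

theorem wordGF_eq_sum_leading_true (f : List Bool → R) (k : ℕ) :
    wordGF f = ∑ j ∈ range k, X ^ j * (C (f (List.replicate j true)) +
        X * wordGF fun w => f (List.replicate j true ++ false :: w)) +
      X ^ k * wordGF fun w => f (List.replicate k true ++ w) := by
  induction k with
  | zero => simp
  | succ k ih =>
    have hcons (w : List Bool) :
        List.replicate k true ++ true :: w = List.replicate (k + 1) true ++ w := by
      simp [List.replicate_succ']
    rw [ih, sum_range_succ, wordGF_eq_C_add_X_mul fun w => f (List.replicate k true ++ w),
      Fintype.sum_bool]
    simp only [hcons, List.append_nil, mul_add, pow_succ, mul_assoc]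
    abel

end WordSeries

section KbonacciSeries

open PowerSeries

/-- The generating function `∑ φ(w) x^|w|` of a statistic `φ` over the `k`-bonacci words `w`. -/
noncomputable def kbonGF {R : Type*} [Semiring R] (k : ℕ) (φ : List Bool → R) : R⟦X⟧ :=
  mk fun n => ∑ w ∈ kbonWords n k, φ (List.ofFn w)

section Semiring

variable {R : Type*} [Semiring R]

theorem kbonGF_eq_wordGF (k : ℕ) (φ : List Bool → R) :
    kbonGF k φ = wordGF fun w => if List.replicate k true <:+: w then 0 else φ w := by
  ext n
  simp only [kbonGF, wordGF, coeff_mk, kbonWords, sum_filter, ite_not]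

theorem kbonGF_eq_sum_leading_true (k : ℕ) (φ : List Bool → R) :
    kbonGF k φ = ∑ j ∈ range k, X ^ j * (C (φ (List.replicate j true)) +
      X * kbonGF k fun w => φ (List.replicate j true ++ false :: w)) := by
  have htail : (wordGF fun w => if List.replicate k true <:+: List.replicate k true ++ w then 0
      else φ (List.replicate k true ++ w)) = 0 := by
    ext n
    simp [wordGF, (List.prefix_append _ _).isInfix]
  rw [kbonGF_eq_wordGF, wordGF_eq_sum_leading_true _ k, htail, mul_zero, add_zero]
  refine sum_congr rfl fun j hj => ?_
  have hjk : j < k := mem_range.mp hj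
  have hrun : ¬ List.replicate k true <:+: List.replicate j true := fun h =>
    hjk.not_ge (by simpa using h.length_le)
  simp only [kbonGF_eq_wordGF, hrun, if_false,
    replicate_infix_replicate_append_cons_iff Bool.false_ne_true hjk]

theorem kbonGF_const_add (k : ℕ) (c : R) (φ : List Bool → R) :
    (kbonGF k fun w => c + φ w) = C c * kbonGF k (fun _ => 1) + kbonGF k φ := by
  ext n
  simp [kbonGF, sum_add_distrib, nsmul_eq_mul, Nat.cast_comm]

theorem kbonGF_one_eq_geom_sum_mul (k : ℕ) :
    kbonGF k (fun _ => (1 : R)) =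
      (∑ j ∈ range k, X ^ j) * (1 + X * kbonGF k fun _ => (1 : R)) := by
  conv_lhs => rw [kbonGF_eq_sum_leading_true]
  rw [sum_mul, map_one]

end Semiring

theorem kbonGF_eq_of_additive {R : Type*} [CommSemiring R] (k : ℕ)
    {φ : List Bool → R} (hφ : ∀ u w, φ (u ++ false :: w) = φ u + φ w) :
    kbonGF k φ =
      (∑ j ∈ range k, C (φ (List.replicate j true)) * X ^ j) * (1 + X * kbonGF k fun _ => 1) +
        X * (∑ j ∈ range k, X ^ j) * kbonGF k φ := by
  conv_lhs => rw [kbonGF_eq_sum_leading_true]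
  simp only [hφ, kbonGF_const_add, sum_mul, mul_sum, ← sum_add_distrib]
  exact sum_congr rfl fun j _ => by ring

theorem sq_mul_kbonGF_of_additive {R : Type*} [CommRing R] (k : ℕ)
    {φ : List Bool → R} (hφ : ∀ u w, φ (u ++ false :: w) = φ u + φ w) :
    (1 - 2 * X + X ^ (k + 1)) ^ 2 * kbonGF k φ =
      (1 - X) ^ 2 * ∑ j ∈ range k, C (φ (List.replicate j true)) * X ^ j := by
  have hN := kbonGF_one_eq_geom_sum_mul (R := R) k
  have hV := kbonGF_eq_of_additive k hφ
  have hP : (1 - X) * ∑ j ∈ range k, X ^ j = (1 - X ^ k : R⟦X⟧) := mul_neg_geom_sum X k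
  set N : R⟦X⟧ := kbonGF k fun _ => 1
  set V := kbonGF k φ
  set P : R⟦X⟧ := ∑ j ∈ range k, X ^ j
  set Q := ∑ j ∈ range k, C (φ (List.replicate j true)) * X ^ j
  have hden : (1 - X) * (1 - X * P) = (1 - 2 * X + X ^ (k + 1) : R⟦X⟧) := by
    linear_combination -X * hP
  have hone_add : (1 - 2 * X + X ^ (k + 1)) * (1 + X * N) = 1 - X := by
    linear_combination (1 - X) * X * hN - (1 + X * N) * hden
  calc (1 - 2 * X + X ^ (k + 1)) ^ 2 * V
      = (1 - 2 * X + X ^ (k + 1)) * ((1 - X) * (Q * (1 + X * N))) := by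
        linear_combination (1 - 2 * X + X ^ (k + 1)) * ((1 - X) * hV - V * hden)
    _ = (1 - X) ^ 2 * Q := by linear_combination (1 - X) * Q * hone_add

end KbonacciSeries

section VertexSeries

open PowerSeries

theorem sum_wVer_replicate_true_mul_X_pow {k : ℕ} (hk : k ≠ 0) :
    ∑ j ∈ range k, C (wVer j (List.replicate j true) : ℤ) * X ^ j =
      3 * ∑ j ∈ range k, ((j : ℤ⟦X⟧) + 1) * X ^ j - 1 := by
  have hterm (j : ℕ) : C (wVer j (List.replicate j true) : ℤ) * X ^ j =
      3 * (((j : ℤ⟦X⟧) + 1) * X ^ j) - if j = 0 then 1 else 0 := by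
    rw [wVer_replicate_true]
    split_ifs with hj
    · norm_num [hj]
    · simp [mul_assoc]
  have hmem : 0 ∈ range k := mem_range.mpr (Nat.pos_of_ne_zero hk)
  simp only [hterm, sum_sub_distrib, ← mul_sum, sum_ite_eq', hmem, if_true]

theorem mk_sum_wVer_eq_kbonGF_sub_C {k : ℕ} (hk : k ≠ 0) :
    (mk fun n => if n = 0 then 0 else ∑ w ∈ kbonWords n k, (wVer n (List.ofFn w) : ℤ)) =
      kbonGF k (fun w => (wVer w.length w : ℤ)) - C 2 := by
  ext n
  rw [map_sub, coeff_C]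
  cases n with
  | zero => simp [kbonGF, kbonWords, wVer, wOnes, wRuns, hk]
  | succ n => simp [kbonGF]

end VertexSeries

theorem total_vertices_gf (k : ℕ) (hk : 2 ≤ k) :
    (1 - 2 * PowerSeries.X + PowerSeries.X ^ (k + 1)) ^ 2
      * PowerSeries.mk (fun n =>
          if n = 0 then 0 else ∑ w ∈ kbonWords n k, (wVer n (List.ofFn w) : ℤ))
    = PowerSeries.C (R := ℤ) 10 * PowerSeries.X
        - PowerSeries.C (R := ℤ) 9 * PowerSeries.X ^ 2
        - PowerSeries.C (R := ℤ) (3 * (1 + (k : ℤ))) * PowerSeries.X ^ k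
        - PowerSeries.C (R := ℤ) (4 - 3 * (k : ℤ)) * PowerSeries.X ^ (k + 1)
        + PowerSeries.C (R := ℤ) 8 * PowerSeries.X ^ (k + 2)
        - PowerSeries.C (R := ℤ) 2 * PowerSeries.X ^ (2 * k + 2) := by
  have hk0 : k ≠ 0 := by omega
  have hV := sq_mul_kbonGF_of_additive k (φ := fun w => (wVer w.length w : ℤ))
    fun u w => mod_cast wVer_append_false_cons u w
  simp only [List.length_replicate, sum_wVer_replicate_true_mul_X_pow hk0] at hV
  rw [mk_sum_wVer_eq_kbonGF_sub_C hk0]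
  simp only [map_mul, map_sub, map_add, map_one, map_ofNat, map_natCast]
  linear_combination hV + 3 * one_sub_sq_mul_sum_succ_mul_pow (PowerSeries.X : PowerSeries ℤ) k
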